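/- The difference-reflection operators realize the extended affine Hecke algebra relations: (i) for every j ∈ {0,…,n}, (T̂_j − τ_j)∘(T̂_j + τ_j⁻¹) = 0 as operators on functions V → ℂ; (ii) for all 0 ≤ j ≠ k ≤ n, if the order m of s_{a_j}s_{a_k} in W is finite, then the alternating products T̂_j∘T̂_k∘T̂_j∘⋯ and T̂_k∘T̂_j∘T̂_k∘⋯ with m factors on each side coincide; (iii) for every u ∈ Ω and j ∈ {0,…,n}, u∘T̂_j∘u⁻¹ = T̂_{u_j}, where u acts on functions by (u f)(x) := f(u⁻¹x). Consequently the assignment T_j ↦ T̂_j, T_u ↦ u extends uniquely to a representation of the extended affine Hecke algebra on the space of functions V → ℂ. -/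

import Mathlib

open scoped RealInnerProductSpace BigOperators Classical

noncomputable section

/-- Alternating composition `A ∘ B ∘ A ∘ ⋯` with `m` factors (starting with `A`). -/
def altComp {α : Type*} (A B : α → α) : ℕ → (α → α)
  | 0 => id
  | m + 1 => A ∘ altComp B A m

/-- The sign of a real number, as an integer (with `sgnZ 0 = 0`). -/
def sgnZ (x : ℝ) : ℤ := if 0 < x then 1 else if x < 0 then -1 else 0

/-- The function `v(x) = (1-t²)∫₀ˣ dy/(1-2t cos y+t²)`. -/
def mvfun (t x : ℝ) : ℝ :=
  (1 - t ^ 2) * ∫ y in (0:ℝ)..x, 1 / (1 - 2 * t * Real.cos y + t ^ 2)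

section AffineOps

variable {V : Type*} [NormedAddCommGroup V] [InnerProductSpace ℝ V]

/-- The coroot `α∨ = 2α/⟨α,α⟩`. -/
def coroot (α : V) : V := (2 / ⟪α, α⟫) • α

/-- The affine root `a = α∨ + r c` (encoded as the pair `(α, r)`), as an affine
function on `V`. -/
def aval (c : ℝ) (a : V × ℤ) (x : V) : ℝ := ⟪x, coroot a.1⟫ + a.2 * c

/-- The affine reflection `s_a(x) = x - a(x) α` attached to `a = α∨ + r c`. -/
def sAff (c : ℝ) (a : V × ℤ) (x : V) : V := x - aval c a x • a.1

/-- `w` maps the affine root `a` to the affine root `b`, i.e. `(wa)(x) = a(w⁻¹x) = b(x)`. -/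
def mapsRoot (c : ℝ) (w : Equiv.Perm V) (a b : V × ℤ) : Prop :=
  ∀ x : V, aval c a (w⁻¹ x) = aval c b x

/-- The linear part `w′` of an affine transformation `w`. -/
def linPart (w : Equiv.Perm V) (x : V) : V := w x - w 0

variable {R : Type*} [Field R]

/-- The difference-reflection operator `T̂_a`. -/
def hatT (c : ℝ) (τ : V × ℤ → R) (a : V × ℤ) (f : V → R) (x : V) : R :=
  if 0 < aval c a x then τ a * f (sAff c a x)
  else if aval c a x = 0 then τ a * f x
  else (τ a)⁻¹ * f (sAff c a x) + (τ a - (τ a)⁻¹) * f x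

/-- The discrete integral operator `J_a`. -/
def Jop (c : ℝ) (a : V × ℤ) (f : V → R) (x : V) : R :=
  if 0 < aval c a x then
    - ∑ k ∈ Finset.Icc (1 : ℤ) ⌊aval c a x⌋, f (x - k • a.1)
  else if aval c a x = 0 then 0
  else ∑ k ∈ Finset.Ico (0 : ℤ) (-⌊aval c a x⌋), f (x + k • a.1)

/-- The integral-reflection operator `I_a = τ_a s_a + (τ_a - τ_a⁻¹) J_a`. -/
def Iop (c : ℝ) (τ : V × ℤ → R) (a : V × ℤ) (f : V → R) (x : V) : R :=
  τ a * f (sAff c a x) + (τ a - (τ a)⁻¹) * Jop c a f x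

end AffineOps

/-- An irreducible reduced crystallographic root system spanning `V`, together with a
choice of positive roots, simple roots, and the highest short root. -/
structure RootSystemData (V : Type*) [NormedAddCommGroup V] [InnerProductSpace ℝ V] :
    Type _ where
  n : ℕ
  n_pos : 1 ≤ n
  rank_eq : Module.finrank ℝ V = n
  R0 : Finset V
  ne_zero : ∀ α ∈ R0, α ≠ (0 : V)
  span_top : Submodule.span ℝ (R0 : Set V) = ⊤
  reduced : ∀ α ∈ R0, ∀ t : ℝ, t • α ∈ R0 → t = 1 ∨ t = -1
  crystallographic : ∀ α ∈ R0, ∀ β ∈ R0, ∃ k : ℤ, ⟪β, coroot α⟫ = (k : ℝ)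
  reflect_mem : ∀ α ∈ R0, ∀ β ∈ R0, β - ⟪β, coroot α⟫ • α ∈ R0
  irreducible : ∀ S : Finset V, S ⊆ R0 →
      (∀ a ∈ S, ∀ b ∈ R0, b ∉ S → ⟪a, b⟫ = 0) → S = ∅ ∨ S = R0
  pos : Finset V
  pos_subset : pos ⊆ R0
  pos_or_neg : ∀ α ∈ R0, α ∈ pos ∨ -α ∈ pos
  pos_not_both : ∀ α ∈ pos, -α ∉ pos
  pos_add : ∀ α ∈ pos, ∀ β ∈ pos, α + β ∈ R0 → α + β ∈ pos
  simpleRoot : Fin n → V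
  simpleRoot_mem : ∀ j, simpleRoot j ∈ pos
  pos_natCombo : ∀ α ∈ pos, ∃ k : Fin n → ℕ, α = ∑ j, (k j : ℝ) • simpleRoot j
  hshort : V
  hshort_mem : hshort ∈ pos
  hshort_short : ∀ α ∈ R0, ‖hshort‖ ≤ ‖α‖
  hshort_highest : ∀ α ∈ R0, ‖α‖ = ‖hshort‖ →
      ∃ k : Fin n → ℕ, hshort - α = ∑ j, (k j : ℝ) • simpleRoot j

namespace RootSystemData

variable {V : Type*} [NormedAddCommGroup V] [InnerProductSpace ℝ V]
variable (D : RootSystemData V)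

/-- The weight lattice `P`. -/
def weightLattice : Set V :=
  {x : V | ∀ α ∈ D.R0, ∃ k : ℤ, ⟪x, coroot α⟫ = (k : ℝ)}

/-- The root lattice `Q`. -/
def rootLattice : Set V := (Submodule.span ℤ (D.R0 : Set V) : Set V)

/-- The coweight lattice `P∨`. -/
def coweightLattice : Set V :=
  {x : V | ∀ α ∈ D.R0, ∃ k : ℤ, ⟪x, α⟫ = (k : ℝ)}

/-- The dominant cone. -/
def dominant : Set V := {x : V | ∀ α ∈ D.pos, 0 ≤ ⟪x, coroot α⟫}

/-- `ω` is a minuscule (dominant) weight. -/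
def IsMinuscule (ω : V) : Prop :=
  ω ∈ D.weightLattice ∧ ω ∈ D.dominant ∧ ω ≠ 0 ∧
    ∀ α ∈ D.pos, ⟪ω, coroot α⟫ ≤ 1

/-- `ω` is the quasi-minuscule weight, i.e. the highest short root. -/
def IsQuasiMinuscule (ω : V) : Prop := ω = D.hshort

/-- The saturated set `P_ϑ` containing the (quasi-)minuscule weights. -/
def Ptheta : Set V :=
  {ν : V | ν ∈ D.weightLattice ∧ ∀ α ∈ D.R0, α ≠ ν → |⟪ν, coroot α⟫| ≤ 1}

/-- Half sum of the positive roots. -/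
def rhoHalf : V := (2⁻¹ : ℝ) • ∑ α ∈ D.pos, α

/-- Half sum of the positive coroots. -/
def rhoVee : V := (2⁻¹ : ℝ) • ∑ α ∈ D.pos, coroot α

/-- `(α, r)` encodes an affine root. -/
def IsAffRoot (a : V × ℤ) : Prop := a.1 ∈ D.R0

/-- `(α, r)` encodes a positive affine root. -/
def IsAffPos (a : V × ℤ) : Prop :=
  a.1 ∈ D.R0 ∧ (1 ≤ a.2 ∨ (a.2 = 0 ∧ a.1 ∈ D.pos))

/-- `(α, r)` encodes a negative affine root. -/
def IsAffNeg (a : V × ℤ) : Prop := D.IsAffPos (-a.1, -a.2)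

/-- The simple affine roots `a₀ = -ϑ∨ + c`, `a_j = α_j∨`. -/
def aSimple (j : Fin (D.n + 1)) : V × ℤ :=
  Fin.cons (α := fun _ => V × ℤ) (-D.hshort, (1 : ℤ))
    (fun i => (D.simpleRoot i, (0 : ℤ))) j

/-- The reflections generating the finite Weyl group `W₀`. -/
def W0Gens : Set (Equiv.Perm V) :=
  {e | ∃ α ∈ D.R0, ∀ x, e x = x - ⟪x, coroot α⟫ • α}

/-- The finite Weyl group `W₀`. -/
def W0 : Subgroup (Equiv.Perm V) := Subgroup.closure D.W0Gens

variable (c : ℝ)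

/-- The affine reflections generating the affine Weyl group `W_R`. -/
def AffGens : Set (Equiv.Perm V) :=
  {e | ∃ a : V × ℤ, D.IsAffRoot a ∧ ∀ x, e x = sAff c a x}

/-- The affine Weyl group `W_R`. -/
def WR : Subgroup (Equiv.Perm V) := Subgroup.closure (D.AffGens c)

/-- The translations `t_{cλ}`, `λ ∈ P`. -/
def TransGens : Set (Equiv.Perm V) :=
  {e | ∃ lam ∈ D.weightLattice, ∀ x : V, e x = x + c • lam}

/-- The extended affine Weyl group `W = W₀ ⋉ t(cP)`. -/
def Wext : Subgroup (Equiv.Perm V) :=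
  Subgroup.closure (D.AffGens c ∪ D.TransGens c)

/-- The set `R(w) = R⁺ ∩ w⁻¹(R⁻)`. -/
def RW (w : Equiv.Perm V) : Set (V × ℤ) :=
  {a | D.IsAffPos a ∧ ∃ b : V × ℤ, D.IsAffNeg b ∧ mapsRoot c w a b}

/-- The length `ℓ(w) = #R(w)`. -/
def len (w : Equiv.Perm V) : ℕ := (D.RW c w).ncard

/-- The closed fundamental alcove `A_c`. -/
def alcove : Set V := {x | ∀ a : V × ℤ, D.IsAffPos a → 0 ≤ aval c a x}

/-- `wmin x` is the unique shortest element of the affine Weyl group mapping `x` into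
the fundamental alcove. -/
def IsWmin (wmin : V → Equiv.Perm V) : Prop :=
  ∀ x : V, wmin x ∈ D.WR c ∧ (wmin x) x ∈ D.alcove c ∧
    ∀ w ∈ D.WR c, w x ∈ D.alcove c → D.len c (wmin x) < D.len c w ∨ w = wmin x

/-- One step in the Bruhat order: `w < w s_a` whenever `ℓ(w) < ℓ(w s_a)`. -/
def bruhatStep (w w' : Equiv.Perm V) : Prop :=
  ∃ a : V × ℤ, D.IsAffPos a ∧ ∃ e : Equiv.Perm V,
    (∀ x, e x = sAff c a x) ∧ w' = w * e ∧ D.len c w < D.len c w'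

/-- The Bruhat order on the affine Weyl group. -/
def bruhatLE (w w' : Equiv.Perm V) : Prop :=
  Relation.ReflTransGen (D.bruhatStep c) w w'

/-- The partial order on `V`: `x ≤ y` iff `x₊ = y₊` and `w_x ≤ w_y` (Bruhat). -/
def vle (wmin : V → Equiv.Perm V) (x y : V) : Prop :=
  (wmin x) x = (wmin y) y ∧ D.bruhatLE c (wmin x) (wmin y)

/-- The interval `[x, y]` for the order `vle`. -/
def vInterval (wmin : V → Equiv.Perm V) (x y : V) : Set V :=
  {z : V | D.vle c wmin x z ∧ D.vle c wmin z y}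

/-- The partial order `⪯` on the weight lattice:
`μ ⪯ λ` iff `λ - μ ∈ Q` and `Conv [μ₊, μ] ⊆ Conv [λ₊, λ]`. -/
def pleq (wmin : V → Equiv.Perm V) (μ lam : V) : Prop :=
  lam - μ ∈ D.rootLattice ∧
    convexHull ℝ (D.vInterval c wmin ((wmin μ) μ) μ)
      ⊆ convexHull ℝ (D.vInterval c wmin ((wmin lam) lam) lam)

section Ops

variable {R : Type*} [Field R]

/-- `τ` is a multiplicity function: nonvanishing on affine roots, and invariant
under the (extended affine) Weyl group action on the affine roots. -/
def IsMultiplicity (τ : V × ℤ → R) : Prop :=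
  (∀ a : V × ℤ, D.IsAffRoot a → τ a ≠ 0) ∧
    ∀ w ∈ D.Wext c, ∀ a b : V × ℤ, D.IsAffRoot a → D.IsAffRoot b →
      mapsRoot c w a b → τ a = τ b

/-- `τ_w = ∏_{a ∈ R(w)} τ_a`. -/
def tauw (τ : V × ℤ → R) (w : Equiv.Perm V) : R := ∏ᶠ a ∈ D.RW c w, τ a

/-- `τ₀`, the multiplicity of the affine simple root `a₀`. -/
def tauZero (τ : V × ℤ → R) : R := τ (-D.hshort, (1 : ℤ))

/-- The operator `I_{j₁} ∘ ⋯ ∘ I_{jℓ}` attached to a word in the simple reflections. -/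
def wordOp (τ : V × ℤ → R) (l : List (Fin (D.n + 1))) : (V → R) → V → R :=
  (l.map fun j => Iop c τ (D.aSimple j)).foldr (· ∘ ·) id

/-- `l` is a reduced word for `w`, i.e. `w = s_{j₁} ∘ ⋯ ∘ s_{jℓ}` with `ℓ = ℓ(w)`. -/
def IsReducedWord (w : Equiv.Perm V) (l : List (Fin (D.n + 1))) : Prop :=
  l.length = D.len c w ∧
    ∀ x : V, w x = ((l.map fun j => sAff c (D.aSimple j)).foldr (· ∘ ·) id) x

/-- `e∨_τ(η) = ∏_{α ∈ R₀⁺} τ_{α∨}^{⟨η,α∨⟩}`. -/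
def etau (τ : V × ℤ → R) (η : V) : R :=
  ∏ α ∈ D.pos, τ (α, (0 : ℤ)) ^ ⌊⟪η, coroot α⟫⌋

/-- `h∨_τ = τ₀² e∨_τ(ϑ)`. -/
def hvee (τ : V × ℤ → R) : R := D.tauZero τ ^ 2 * D.etau τ D.hshort

/-- `θ(μ) = #{b ∈ R(w_μ) : b(μ) = -2}`. -/
def theta (wmin : V → Equiv.Perm V) (μ : V) : ℕ :=
  {b : V × ℤ | b ∈ D.RW c (wmin μ) ∧ aval c b μ = -2}.ncard

/-- The coefficient `c_{λ,η} = θ(λ-η) e∨_τ(η) (h∨_τ)^{-sign⟨λ,η∨⟩}`. -/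
def ccoef (τ : V × ℤ → R) (wmin : V → Equiv.Perm V) (lam η : V) : R :=
  (D.theta c wmin (lam - η) : R) * D.etau τ η *
    D.hvee τ ^ (-sgnZ ⟪lam, coroot η⟫)

/-- The coefficient `a_{λ,ν} = τ_{w_{w_λ(λ-ν)}} τ_{w_{w_λ(λ-ν)} w_λ} τ_{w_λ}⁻¹`. -/
def acoef (τ : V × ℤ → R) (wmin : V → Equiv.Perm V) (lam ν : V) : R :=
  D.tauw c τ (wmin ((wmin lam) (lam - ν))) *
    D.tauw c τ (wmin ((wmin lam) (lam - ν)) * wmin lam) *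
    (D.tauw c τ (wmin lam))⁻¹

/-- The coefficient `b_{λ,ν}`. -/
def bcoef (τ : V × ℤ → R) (wmin : V → Equiv.Perm V) (lam ν : V) : R :=
  if (wmin (lam - ν)) (lam - ν) = (wmin lam) lam then
    D.tauw c τ (wmin ((wmin lam) (lam - ν))) ^ 2 *
      (if D.IsAffNeg (ν, ⌊(1 - ⟪lam, coroot ν⟫) / c⌋) then 1 else 0)
  else D.ccoef c τ wmin ((wmin lam) lam) (linPart (wmin lam) ν)

/-- The intertwining operator `(𝒥f)(λ) = τ_{w_λ}⁻¹ (I_{w_λ} f)(λ₊)`, where `Iw` assigns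
to each `w_λ` the composite of integral-reflection operators along a reduced word. -/
def Jcal (τ : V × ℤ → R) (wmin : V → Equiv.Perm V)
    (Iw : Equiv.Perm V → (V → R) → V → R) (f : V → R) (x : V) : R :=
  (D.tauw c τ (wmin x))⁻¹ * Iw (wmin x) f ((wmin x) x)

end Ops

/-- The Yang–Yang type Morse function `𝒱_μ`. -/
def morse (t : V → ℝ) (μ ξ : V) : ℝ :=
  (c / 2) * ⟪ξ, ξ⟫ - 2 * Real.pi * ⟪D.rhoVee + μ, ξ⟫ +
    ∑ α ∈ D.pos, (2 / ⟪α, α⟫) * ∫ x in (0:ℝ)..(⟪ξ, α⟫), mvfun (t α) x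

/-- The critical equation `cξ + ∑_{α>0} v_α(⟨ξ,α⟩) α∨ = 2π(ρ∨+μ)`. -/
def criticalEq (t : V → ℝ) (μ ξ : V) : Prop :=
  c • ξ + ∑ α ∈ D.pos, mvfun (t α) ⟪ξ, α⟫ • coroot α
    = (2 * Real.pi) • (D.rhoVee + μ)

/-- The Hessian bilinear form `H_{η,ζ}(ξ)`. -/
def hessForm (t : V → ℝ) (ξ η ζ : V) : ℝ :=
  c * ⟪η, ζ⟫ + ∑ α ∈ D.R0,
    (1 - t α ^ 2) * ⟪η, α⟫ * ⟪ζ, α⟫ /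
      (⟪α, α⟫ * (1 - 2 * t α * Real.cos ⟪ξ, α⟫ + t α ^ 2))

/-- `κ_± = (2/n) ∑_{α>0} (1-t_α²)/(1 ± |t_α|)²`; here `s = ±1`. -/
def kappaPM (t : V → ℝ) (s : ℝ) : ℝ :=
  (2 / (D.n : ℝ)) * ∑ α ∈ D.pos, (1 - t α ^ 2) / (1 + s * |t α|) ^ 2

end RootSystemData

section HeckeHelpers

/-- Abstract difference-reflection operator, as a linear endomorphism. -/
def Tlin {X : Type*} (s : X → X) (p : X → ℝ) (t : ℂ) : Module.End ℂ (X → ℂ) where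
  toFun f := fun x => if 0 ≤ p x then t * f (s x) else t⁻¹ * f (s x) + (t - t⁻¹) * f x
  map_add' f g := by
    funext x; simp only [Pi.add_apply]; split_ifs <;> ring
  map_smul' r f := by
    funext x; simp only [Pi.smul_apply, smul_eq_mul, RingHom.id_apply]; split_ifs <;> ring

lemma Tlin_pos {X : Type*} {s : X → X} {p : X → ℝ} {t : ℂ} {x : X} (h : 0 ≤ p x) (f : X → ℂ) :
    Tlin s p t f x = t * f (s x) := by
  simp [Tlin, h]

lemma Tlin_neg {X : Type*} {s : X → X} {p : X → ℝ} {t : ℂ} {x : X} (h : p x < 0) (f : X → ℂ) :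
    Tlin s p t f x = t⁻¹ * f (s x) + (t - t⁻¹) * f x := by
  simp [Tlin, not_le.mpr h]

lemma Tlin_sq {X : Type*} {s : X → X} {p : X → ℝ} {t : ℂ} (ht : t ≠ 0)
    (hs : ∀ x, s (s x) = x) (hp : ∀ x, p (s x) = - p x) (h0 : ∀ x, p x = 0 → s x = x) :
    Tlin s p t * Tlin s p t = (t - t⁻¹) • Tlin s p t + 1 := by
  ext1 f
  funext x
  simp only [Module.End.mul_apply, LinearMap.add_apply, LinearMap.smul_apply, Module.End.one_apply,
    Pi.add_apply, Pi.smul_apply, smul_eq_mul]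
  rcases lt_trichotomy (p x) 0 with h | h | h
  · have h' : 0 ≤ p (s x) := by rw [hp]; linarith
    rw [Tlin_neg h, Tlin_neg h, Tlin_pos h', hs]
    field_simp
    ring
  · rw [Tlin_pos h.ge, Tlin_pos h.ge, h0 x h, Tlin_pos h.ge, h0 x h]
    field_simp
    ring
  · have h' : p (s x) < 0 := by rw [hp]; linarith
    rw [Tlin_pos h.le, Tlin_pos h.le, Tlin_neg h', hs]
    field_simp
    ring

/-- Propagation of the braid relation through a reflection. -/
lemma braid_step {X : Type*} {s : X → X} {p : X → ℝ} {t : ℂ} (ht : t ≠ 0)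
    (hs : ∀ x, s (s x) = x) (hp : ∀ x, p (s x) = - p x)
    {W W' U Tc : Module.End ℂ (X → ℂ)}
    (hsq : Tlin s p t * Tlin s p t = (t - t⁻¹) • Tlin s p t + 1)
    (hcq : Tc * Tc = (t - t⁻¹) • Tc + 1)
    (hW : W = Tlin s p t * U) (hW' : W' = U * Tc)
    (x : X) (hx : p x < 0) (h : ∀ f, W f (s x) = W' f (s x)) :
    ∀ f, W f x = W' f x := by
  intro f
  have hpos : 0 ≤ p (s x) := by rw [hp]; linarith
  have e1 : Tlin s p t * W' = W * Tc := by rw [hW, hW', mul_assoc]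
  have e2 : W' * Tc = (t - t⁻¹) • W' + U := by
    rw [hW', mul_assoc, hcq, mul_add, mul_one, mul_smul_comm]
  have e3 : Tlin s p t * W = (t - t⁻¹) • W + U := by
    rw [hW, ← mul_assoc, hsq, add_mul, one_mul, smul_mul_assoc]
  have k1 : (Tlin s p t * W') f (s x) = t * W' f x := by
    rw [Module.End.mul_apply, Tlin_pos hpos, hs]
  have k2 : (Tlin s p t * W) f (s x) = t * W f x := by
    rw [Module.End.mul_apply, Tlin_pos hpos, hs]
  have k3 : (Tlin s p t * W') f (s x) = (Tlin s p t * W) f (s x) := by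
    rw [e1, Module.End.mul_apply, h, ← Module.End.mul_apply, e2, e3]
    simp [h]
  rw [k1, k2] at k3
  exact (mul_left_cancel₀ ht k3).symm

/-- Rank two data: two reflections with Cartan integers `-A`, `-B`. -/
structure Rk2 (X : Type*) (sa sb : X → X) (p q : X → ℝ) (A B : ℝ) (ta tb : ℂ) : Prop where
  hta : ta ≠ 0
  htb : tb ≠ 0
  hsa : ∀ x, sa (sa x) = x
  hsb : ∀ x, sb (sb x) = x
  hpa : ∀ x, p (sa x) = - p x
  hqa : ∀ x, q (sa x) = q x + A * p x
  hpb : ∀ x, p (sb x) = p x + B * q x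
  hqb : ∀ x, q (sb x) = - q x
  ha0 : ∀ x, p x = 0 → sa x = x
  hb0 : ∀ x, q x = 0 → sb x = x

lemma Rk2.sqa {X : Type*} {sa sb : X → X} {p q : X → ℝ} {A B : ℝ} {ta tb : ℂ}
    (H : Rk2 X sa sb p q A B ta tb) :
    Tlin sa p ta * Tlin sa p ta = (ta - ta⁻¹) • Tlin sa p ta + 1 :=
  Tlin_sq H.hta H.hsa H.hpa H.ha0

lemma Rk2.sqb {X : Type*} {sa sb : X → X} {p q : X → ℝ} {A B : ℝ} {ta tb : ℂ}
    (H : Rk2 X sa sb p q A B ta tb) :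
    Tlin sb q tb * Tlin sb q tb = (tb - tb⁻¹) • Tlin sb q tb + 1 :=
  Tlin_sq H.htb H.hsb H.hqb H.hb0

lemma Rk2.swap {X : Type*} {sa sb : X → X} {p q : X → ℝ} {A B : ℝ} {ta tb : ℂ}
    (H : Rk2 X sa sb p q A B ta tb) : Rk2 X sb sa q p B A tb ta :=
  ⟨H.htb, H.hta, H.hsb, H.hsa, H.hqb, H.hpb, H.hqa, H.hpa, H.hb0, H.ha0⟩

lemma Rk2.reach {X : Type*} {sa sb : X → X} {p q : X → ℝ} {A B : ℝ} {ta tb : ℂ}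
    (H : Rk2 X sa sb p q A B ta tb)
    (hAB : (A = 0 ∧ B = 0) ∨ (A = 1 ∧ B = 1) ∨ (A = 1 ∧ B = 2) ∨ (A = 1 ∧ B = 3))
    (P : X → Prop) (hd : ∀ x, 0 ≤ p x → 0 ≤ q x → P x)
    (ha : ∀ x, p x < 0 → P (sa x) → P x) (hb : ∀ x, q x < 0 → P (sb x) → P x) (x : X) : P x := by
  obtain ⟨-, -, -, -, hpa, hqa, hpb, hqb, -, -⟩ := H
  have main : ∀ y, 0 ≤ p y ∨ 0 ≤ q y → P y := by
    intro y hy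
    rcases hy with hy | hy
    · by_cases h1 : 0 ≤ q y
      · exact hd _ hy h1
      push Not at h1; refine hb _ h1 ?_
      by_cases h2 : 0 ≤ p (sb y)
      · exact hd _ h2 (by rw [hqb]; linarith)
      push Not at h2; refine ha _ h2 ?_
      by_cases h3 : 0 ≤ q (sa (sb y))
      · exact hd _ (by rw [hpa]; linarith) h3
      push Not at h3; refine hb _ h3 ?_
      by_cases h4 : 0 ≤ p (sb (sa (sb y)))
      · exact hd _ h4 (by rw [hqb]; linarith)
      push Not at h4; refine ha _ h4 ?_
      by_cases h5 : 0 ≤ q (sa (sb (sa (sb y))))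
      · exact hd _ (by rw [hpa]; linarith) h5
      push Not at h5; refine hb _ h5 ?_
      by_cases h6 : 0 ≤ p (sb (sa (sb (sa (sb y)))))
      · exact hd _ h6 (by rw [hqb]; linarith)
      exfalso
      push Not at h6
      simp only [hpa, hqa, hpb, hqb] at *
      rcases hAB with ⟨rfl, rfl⟩ | ⟨rfl, rfl⟩ | ⟨rfl, rfl⟩ | ⟨rfl, rfl⟩ <;> linarith
    · by_cases h1 : 0 ≤ p y
      · exact hd _ h1 hy
      push Not at h1; refine ha _ h1 ?_
      by_cases h2 : 0 ≤ q (sa y)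
      · exact hd _ (by rw [hpa]; linarith) h2
      push Not at h2; refine hb _ h2 ?_
      by_cases h3 : 0 ≤ p (sb (sa y))
      · exact hd _ h3 (by rw [hqb]; linarith)
      push Not at h3; refine ha _ h3 ?_
      by_cases h4 : 0 ≤ q (sa (sb (sa y)))
      · exact hd _ (by rw [hpa]; linarith) h4
      push Not at h4; refine hb _ h4 ?_
      by_cases h5 : 0 ≤ p (sb (sa (sb (sa y))))
      · exact hd _ h5 (by rw [hqb]; linarith)
      push Not at h5; refine ha _ h5 ?_
      by_cases h6 : 0 ≤ q (sa (sb (sa (sb (sa y)))))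
      · exact hd _ (by rw [hpa]; linarith) h6
      exfalso
      push Not at h6
      simp only [hpa, hqa, hpb, hqb] at *
      rcases hAB with ⟨rfl, rfl⟩ | ⟨rfl, rfl⟩ | ⟨rfl, rfl⟩ | ⟨rfl, rfl⟩ <;> linarith
  by_cases hx : 0 ≤ p x
  · exact main x (Or.inl hx)
  · push Not at hx
    exact ha x hx (main _ (Or.inl (by rw [hpa]; linarith)))

lemma Rk2.core {X : Type*} {sa sb : X → X} {p q : X → ℝ} {A B : ℝ} {ta tb : ℂ}
    (H : Rk2 X sa sb p q A B ta tb)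
    (hAB : (A = 0 ∧ B = 0) ∨ (A = 1 ∧ B = 1) ∨ (A = 1 ∧ B = 2) ∨ (A = 1 ∧ B = 3))
    {W W' U U' Tc Tc' : Module.End ℂ (X → ℂ)}
    (hW : W = Tlin sa p ta * U) (hW' : W' = U * Tc)
    (hV : W' = Tlin sb q tb * U') (hV' : W = U' * Tc')
    (hc : Tc * Tc = (ta - ta⁻¹) • Tc + 1)
    (hc' : Tc' * Tc' = (tb - tb⁻¹) • Tc' + 1)
    (hd : ∀ x, 0 ≤ p x → 0 ≤ q x → ∀ f, W f x = W' f x) : W = W' := by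
  have := H.reach hAB (fun x => ∀ f, W f x = W' f x) hd
    (fun x hx h => braid_step H.hta H.hsa H.hpa H.sqa hc hW hW' x hx h)
    (fun x hx h f => (braid_step H.htb H.hsb H.hqb H.sqb hc' hV hV' x hx
      (fun g => (h g).symm) f).symm)
  ext1 f
  funext x
  exact this x f

lemma Rk2.braid2 {X : Type*} {sa sb : X → X} {p q : X → ℝ} {ta tb : ℂ}
    (H : Rk2 X sa sb p q 0 0 ta tb) (hw : ∀ x, sb (sa x) = sa (sb x)) :
    Tlin sa p ta * Tlin sb q tb = Tlin sb q tb * Tlin sa p ta := by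
  refine H.core (Or.inl ⟨rfl, rfl⟩) (U := Tlin sb q tb) (U' := Tlin sa p ta)
    (Tc := Tlin sa p ta) (Tc' := Tlin sb q tb) rfl rfl rfl rfl H.sqa H.sqb ?_
  intro x hp hq f
  simp only [Module.End.mul_apply]
  rw [Tlin_pos (x := x) hp, Tlin_pos (x := x) hq, Tlin_pos (x := sa x), Tlin_pos (x := sb x), hw]
  · ring
  all_goals simp only [H.hpa, H.hqa, H.hpb, H.hqb]; linarith

lemma Rk2.braid3 {X : Type*} {sa sb : X → X} {p q : X → ℝ} {ta tb : ℂ}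
    (H : Rk2 X sa sb p q 1 1 ta tb) (ht : ta = tb)
    (hw : ∀ x, sa (sb (sa x)) = sb (sa (sb x))) :
    Tlin sa p ta * (Tlin sb q tb * Tlin sa p ta)
      = Tlin sb q tb * (Tlin sa p ta * Tlin sb q tb) := by
  refine H.core (Or.inr (Or.inl ⟨rfl, rfl⟩))
    (U := Tlin sb q tb * Tlin sa p ta) (U' := Tlin sa p ta * Tlin sb q tb)
    (Tc := Tlin sb q tb) (Tc' := Tlin sa p ta) rfl (by simp only [mul_assoc]) rfl
    (by simp only [mul_assoc]) (by rw [ht]; exact H.sqb) (by rw [← ht]; exact H.sqa) ?_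
  intro x hp hq f
  simp only [Module.End.mul_apply]
  rw [Tlin_pos (x := x) hp, Tlin_pos (x := x) hq, Tlin_pos (x := sa x), Tlin_pos (x := sb x),
    Tlin_pos (x := sb (sa x)), Tlin_pos (x := sa (sb x)), hw, ht]
  all_goals simp only [H.hpa, H.hqa, H.hpb, H.hqb]; linarith

lemma Rk2.braid4 {X : Type*} {sa sb : X → X} {p q : X → ℝ} {ta tb : ℂ}
    (H : Rk2 X sa sb p q 1 2 ta tb)
    (hw : ∀ x, sb (sa (sb (sa x))) = sa (sb (sa (sb x)))) :
    Tlin sa p ta * (Tlin sb q tb * (Tlin sa p ta * Tlin sb q tb))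
      = Tlin sb q tb * (Tlin sa p ta * (Tlin sb q tb * Tlin sa p ta)) := by
  refine H.core (Or.inr (Or.inr (Or.inl ⟨rfl, rfl⟩)))
    (U := Tlin sb q tb * (Tlin sa p ta * Tlin sb q tb))
    (U' := Tlin sa p ta * (Tlin sb q tb * Tlin sa p ta))
    (Tc := Tlin sa p ta) (Tc' := Tlin sb q tb) rfl (by simp only [mul_assoc]) rfl
    (by simp only [mul_assoc]) H.sqa H.sqb ?_
  intro x hp hq f
  simp only [Module.End.mul_apply]
  rw [Tlin_pos (x := x) hp, Tlin_pos (x := x) hq, Tlin_pos (x := sa x), Tlin_pos (x := sb x),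
    Tlin_pos (x := sb (sa x)), Tlin_pos (x := sa (sb x)),
    Tlin_pos (x := sa (sb (sa x))), Tlin_pos (x := sb (sa (sb x))), hw]
  · ring
  all_goals simp only [H.hpa, H.hqa, H.hpb, H.hqb]; linarith

lemma Rk2.braid6 {X : Type*} {sa sb : X → X} {p q : X → ℝ} {ta tb : ℂ}
    (H : Rk2 X sa sb p q 1 3 ta tb)
    (hw : ∀ x, sb (sa (sb (sa (sb (sa x))))) = sa (sb (sa (sb (sa (sb x)))))) :
    Tlin sa p ta * (Tlin sb q tb * (Tlin sa p ta * (Tlin sb q tb *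
      (Tlin sa p ta * Tlin sb q tb))))
      = Tlin sb q tb * (Tlin sa p ta * (Tlin sb q tb * (Tlin sa p ta *
        (Tlin sb q tb * Tlin sa p ta)))) := by
  refine H.core (Or.inr (Or.inr (Or.inr ⟨rfl, rfl⟩)))
    (U := Tlin sb q tb * (Tlin sa p ta * (Tlin sb q tb * (Tlin sa p ta * Tlin sb q tb))))
    (U' := Tlin sa p ta * (Tlin sb q tb * (Tlin sa p ta * (Tlin sb q tb * Tlin sa p ta))))
    (Tc := Tlin sa p ta) (Tc' := Tlin sb q tb) rfl (by simp only [mul_assoc]) rfl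
    (by simp only [mul_assoc]) H.sqa H.sqb ?_
  intro x hp hq f
  simp only [Module.End.mul_apply]
  rw [Tlin_pos (x := x) hp, Tlin_pos (x := x) hq, Tlin_pos (x := sa x), Tlin_pos (x := sb x),
    Tlin_pos (x := sb (sa x)), Tlin_pos (x := sa (sb x)),
    Tlin_pos (x := sa (sb (sa x))), Tlin_pos (x := sb (sa (sb x))),
    Tlin_pos (x := sb (sa (sb (sa x)))), Tlin_pos (x := sa (sb (sa (sb x)))),
    Tlin_pos (x := sa (sb (sa (sb (sa x))))), Tlin_pos (x := sb (sa (sb (sa (sb x))))), hw]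
  · ring
  all_goals simp only [H.hpa, H.hqa, H.hpb, H.hqb]; linarith

/-- The order of `sa ∘ sb` is the expected Coxeter number. -/
lemma Rk2.order {X : Type*} {sa sb : X → X} {p q : X → ℝ} {A B : ℝ} {ta tb : ℂ}
    (H : Rk2 X sa sb p q A B ta tb) (m m0 : ℕ)
    (hAB : (m0 = 2 ∧ A = 0 ∧ B = 0) ∨ (m0 = 3 ∧ A = 1 ∧ B = 1) ∨
      (m0 = 4 ∧ ((A = 1 ∧ B = 2) ∨ (A = 2 ∧ B = 1))) ∨
      (m0 = 6 ∧ ((A = 1 ∧ B = 3) ∨ (A = 3 ∧ B = 1))))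
    (x : X) (hx : p x ≠ 0)
    (hm : 0 < m) (hid : (fun y => sa (sb y))^[m] = id)
    (hmin : ∀ m' : ℕ, 0 < m' → m' < m → (fun y => sa (sb y))^[m'] ≠ id)
    (h0 : (fun y => sa (sb y))^[m0] = id) : m = m0 := by
  have hm0 : 0 < m0 := by
    rcases hAB with h | h | h | h <;> omega
  have hle : m ≤ m0 := by
    by_contra h
    exact hmin m0 hm0 (not_le.mp h) h0
  by_contra hne
  have hlt : m < m0 := lt_of_le_of_ne hle hne
  have hm6 : m < 6 := by
    rcases hAB with h | h | h | h <;> omega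
  have e1 := congrArg p (congrFun hid x)
  have e2 := congrArg q (congrFun hid x)
  interval_cases m <;>
  simp only [Function.iterate_succ, Function.iterate_zero, Function.comp_apply, id_eq,
    H.hpa, H.hqa, H.hpb, H.hqb] at e1 e2 <;>
  rcases hAB with ⟨rfl, rfl, rfl⟩ | ⟨rfl, rfl, rfl⟩ | ⟨rfl, ⟨rfl, rfl⟩ | ⟨rfl, rfl⟩⟩ |
    ⟨rfl, ⟨rfl, rfl⟩ | ⟨rfl, rfl⟩⟩ <;>
  first
  | (exfalso; omega)
  | (apply hx; linarith)

end HeckeHelpers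

section Geometry

variable {V : Type*} [NormedAddCommGroup V] [InnerProductSpace ℝ V]

lemma inner_coroot_self {α : V} (h : α ≠ 0) : ⟪α, coroot α⟫ = (2 : ℝ) := by
  have : ⟪α, α⟫ ≠ (0 : ℝ) := inner_self_ne_zero.mpr h
  rw [coroot, inner_smul_right]
  field_simp

lemma inner_coroot (x α : V) : ⟪x, coroot α⟫ = (2 / ⟪α, α⟫ : ℝ) * ⟪x, α⟫ := by
  rw [coroot, inner_smul_right]

lemma coroot_coroot {α : V} (h : α ≠ 0) : coroot (coroot α) = α := by
  have : ⟪α, α⟫ ≠ (0 : ℝ) := inner_self_ne_zero.mpr h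
  simp only [coroot, inner_smul_right, inner_smul_left, smul_smul, RCLike.conj_to_real]
  rw [show (2 / (2 / ⟪α, α⟫ * (2 / ⟪α, α⟫ * ⟪α, α⟫)) * (2 / ⟪α, α⟫) : ℝ) = 1 by field_simp, one_smul]

lemma aval_add (c : ℝ) (a : V × ℤ) (x v : V) :
    aval c a (x + v) = aval c a x + ⟪v, coroot a.1⟫ := by
  simp only [aval, inner_add_left]; ring

lemma aval_sAff (c : ℝ) (a b : V × ℤ) (x : V) :
    aval c a (sAff c b x) = aval c a x - aval c b x * ⟪b.1, coroot a.1⟫ := by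
  rw [sAff, sub_eq_add_neg, aval_add, inner_neg_left, inner_smul_left]
  simp; ring

lemma hatT_eq (c : ℝ) (τ : V × ℤ → ℂ) (a : V × ℤ) (f : V → ℂ) :
    hatT c τ a f = Tlin (sAff c a) (aval c a) (τ a) f := by
  funext x
  rcases lt_trichotomy (aval c a x) 0 with h | h | h
  · rw [Tlin_neg h, hatT, if_neg h.le.not_gt, if_neg h.ne]
  · rw [Tlin_pos h.ge, hatT, if_neg h.le.not_gt, if_pos h]
    simp [sAff, h]
  · rw [Tlin_pos h.le, hatT, if_pos h]

lemma sAff_self (c : ℝ) {a : V × ℤ} (h : a.1 ≠ 0) (x : V) : sAff c a (sAff c a x) = x := by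
  have : aval c a (sAff c a x) = - aval c a x := by
    rw [aval_sAff, inner_coroot_self h]; ring
  rw [sAff, this, sAff]; module

lemma rk2_of (c : ℝ) (τ : V × ℤ → ℂ) (a b : V × ℤ) (ha : a.1 ≠ 0) (hb : b.1 ≠ 0)
    (hta : τ a ≠ 0) (htb : τ b ≠ 0) :
    Rk2 V (sAff c a) (sAff c b) (aval c a) (aval c b) (-⟪a.1, coroot b.1⟫) (-⟪b.1, coroot a.1⟫)
      (τ a) (τ b) where
  hta := hta
  htb := htb
  hsa := sAff_self c ha
  hsb := sAff_self c hb
  hpa x := by rw [aval_sAff, inner_coroot_self ha]; ring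
  hqa x := by rw [aval_sAff]; ring
  hpb x := by rw [aval_sAff]; ring
  hqb x := by rw [aval_sAff, inner_coroot_self hb]; ring
  ha0 x h := by simp [sAff, h]
  hb0 x h := by simp [sAff, h]

lemma reflect_norm (α x : V) : ‖x - ⟪x, coroot α⟫ • α‖ = ‖x‖ := by
  by_cases h : α = 0
  · simp [h]
  have h' : ⟪α, α⟫ ≠ (0 : ℝ) := inner_self_ne_zero.mpr h
  have : ‖x - ⟪x, coroot α⟫ • α‖ ^ 2 = ‖x‖ ^ 2 := by
    rw [norm_sub_sq_real, norm_smul, mul_pow, inner_smul_right, inner_coroot,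
      ← real_inner_self_eq_norm_sq α, Real.norm_eq_abs, sq_abs]
    field_simp
    ring
  exact (sq_eq_sq₀ (norm_nonneg _) (norm_nonneg _)).mp this

lemma Rk2.word4 {sa sb : V → V} {p q : V → ℝ} {ta tb : ℂ} {α β : V}
    (H : Rk2 V sa sb p q 1 2 ta tb) (ha : ∀ x, sa x = x - p x • α)
    (hb : ∀ x, sb x = x - q x • β) (x : V) :
    sb (sa (sb (sa x))) = sa (sb (sa (sb x))) := by
  simp only [hb (sa (sb (sa x))), ha (sb (sa (sb x))), H.hpa, H.hqa, H.hpb, H.hqb]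
  simp only [ha (sb (sa x)), hb (sa (sb x)), H.hpa, H.hqa, H.hpb, H.hqb]
  simp only [hb (sa x), ha (sb x), H.hpa, H.hqa, H.hpb, H.hqb]
  simp only [ha x, hb x, H.hpa, H.hqa, H.hpb, H.hqb]
  module

lemma Rk2.word6 {sa sb : V → V} {p q : V → ℝ} {ta tb : ℂ} {α β : V}
    (H : Rk2 V sa sb p q 1 3 ta tb) (ha : ∀ x, sa x = x - p x • α)
    (hb : ∀ x, sb x = x - q x • β) (x : V) :
    sb (sa (sb (sa (sb (sa x))))) = sa (sb (sa (sb (sa (sb x))))) := by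
  simp only [hb (sa (sb (sa (sb (sa x))))), ha (sb (sa (sb (sa (sb x))))), H.hpa, H.hqa, H.hpb, H.hqb]
  simp only [ha (sb (sa (sb (sa x)))), hb (sa (sb (sa (sb x)))), H.hpa, H.hqa, H.hpb, H.hqb]
  simp only [hb (sa (sb (sa x))), ha (sb (sa (sb x))), H.hpa, H.hqa, H.hpb, H.hqb]
  simp only [ha (sb (sa x)), hb (sa (sb x)), H.hpa, H.hqa, H.hpb, H.hqb]
  simp only [hb (sa x), ha (sb x), H.hpa, H.hqa, H.hpb, H.hqb]
  simp only [ha x, hb x, H.hpa, H.hqa, H.hpb, H.hqb]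
  module

end Geometry

namespace RootSystemData

variable {V : Type*} [NormedAddCommGroup V] [InnerProductSpace ℝ V] (D : RootSystemData V)

lemma neg_mem {α : V} (h : α ∈ D.R0) : -α ∈ D.R0 := by
  have := D.reflect_mem α h α h
  rw [inner_coroot_self (D.ne_zero α h)] at this
  convert this using 1; module

lemma aSimple_zero : D.aSimple 0 = (-D.hshort, 1) := rfl

lemma aSimple_succ (i : Fin D.n) : D.aSimple i.succ = (D.simpleRoot i, 0) := rfl

lemma aSimple_mem (j : Fin (D.n + 1)) : (D.aSimple j).1 ∈ D.R0 := by
  refine Fin.cases ?_ (fun i => ?_) j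
  · exact D.neg_mem (D.pos_subset D.hshort_mem)
  · exact D.pos_subset (D.simpleRoot_mem i)

lemma linInd : LinearIndependent ℝ D.simpleRoot := by
  apply linearIndependent_of_top_le_span_of_card_eq_finrank
  · rw [← D.span_top, Submodule.span_le]
    have key : ∀ β ∈ D.pos, β ∈ Submodule.span ℝ (Set.range D.simpleRoot) := by
      intro β hβ
      obtain ⟨k, hk⟩ := D.pos_natCombo β hβ
      rw [hk]
      exact Submodule.sum_mem _ fun j _ => Submodule.smul_mem _ _ (Submodule.subset_span ⟨j, rfl⟩)
    intro α hα
    rcases D.pos_or_neg α hα with h | h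
    · exact key α h
    · have := Submodule.neg_mem _ (key _ h)
      rwa [neg_neg] at this
  · rw [D.rank_eq, Fintype.card_fin]

lemma coeff_ext {f g : Fin D.n → ℝ}
    (h : ∑ j, f j • D.simpleRoot j = ∑ j, g j • D.simpleRoot j) : f = g := by
  have := Fintype.linearIndependent_iff.mp D.linInd (fun j => f j - g j) (by
    simp only [sub_smul, Finset.sum_sub_distrib, h, sub_self])
  funext j
  linarith [this j]

lemma simple_obtuse {i k : Fin D.n} (hik : i ≠ k) :
    ⟪D.simpleRoot i, coroot (D.simpleRoot k)⟫ ≤ (0 : ℝ) := by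
  by_contra hpos
  push Not at hpos
  set r : ℝ := ⟪D.simpleRoot i, coroot (D.simpleRoot k)⟫ with hr
  have hmem := D.reflect_mem _ (D.pos_subset (D.simpleRoot_mem k)) _
    (D.pos_subset (D.simpleRoot_mem i))
  rw [← hr] at hmem
  have hsum : D.simpleRoot i - r • D.simpleRoot k
      = ∑ j, ((if j = i then (1 : ℝ) else 0) - (if j = k then r else 0)) • D.simpleRoot j := by
    simp [sub_smul, Finset.sum_sub_distrib, ite_smul]
  rcases D.pos_or_neg _ hmem with h | h
  · obtain ⟨l, hl⟩ := D.pos_natCombo _ h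
    rw [hsum] at hl
    have := congrFun (D.coeff_ext hl) k
    simp only [if_neg hik.symm, if_true] at this
    have h0 : (0 : ℝ) ≤ l k := Nat.cast_nonneg _
    linarith
  · obtain ⟨l, hl⟩ := D.pos_natCombo _ h
    rw [hsum, ← Finset.sum_neg_distrib] at hl
    simp only [← neg_smul] at hl
    have := congrFun (D.coeff_ext hl) i
    simp only [if_neg hik, if_true] at this
    have h0 : (0 : ℝ) ≤ l i := Nat.cast_nonneg _
    linarith

lemma hshort_dom (k : Fin D.n) :
    (0 : ℝ) ≤ ⟪D.hshort, coroot (D.simpleRoot k)⟫ := by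
  set r : ℝ := ⟪D.hshort, coroot (D.simpleRoot k)⟫ with hr
  have hmem := D.reflect_mem _ (D.pos_subset (D.simpleRoot_mem k)) _ (D.pos_subset D.hshort_mem)
  obtain ⟨l, hl⟩ := D.hshort_highest _ hmem (reflect_norm _ _)
  rw [← hr, sub_sub_cancel] at hl
  have hsum : r • D.simpleRoot k = ∑ j, (if j = k then r else 0) • D.simpleRoot j := by
    simp [ite_smul]
  rw [hsum] at hl
  have := congrFun (D.coeff_ext hl) k
  simp only [if_true] at this
  rw [this]
  exact Nat.cast_nonneg _

lemma inner_nonpos_of {α β : V} (hβ : β ≠ 0) (h : ⟪α, coroot β⟫ ≤ (0 : ℝ)) :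
    ⟪α, β⟫ ≤ (0 : ℝ) := by
  rw [inner_coroot] at h
  have : (0 : ℝ) < 2 / ⟪β, β⟫ := div_pos two_pos (real_inner_self_pos.mpr hβ)
  by_contra h'
  push Not at h'
  linarith [mul_pos this h']

lemma aSimple_obtuse {j k : Fin (D.n + 1)} (hjk : j ≠ k) :
    ⟪(D.aSimple j).1, (D.aSimple k).1⟫ ≤ (0 : ℝ) := by
  have hs : ∀ i, D.simpleRoot i ≠ 0 := fun i => D.ne_zero _ (D.pos_subset (D.simpleRoot_mem i))
  have h0 : ∀ i, ⟪-D.hshort, D.simpleRoot i⟫ ≤ (0 : ℝ) := fun i =>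
    inner_nonpos_of (hs i) (by rw [inner_neg_left]; linarith [D.hshort_dom i])
  induction j using Fin.cases with
  | zero =>
    induction k using Fin.cases with
    | zero => exact absurd rfl hjk
    | succ i => exact h0 i
  | succ i =>
    induction k using Fin.cases with
    | zero => rw [real_inner_comm]; exact h0 i
    | succ l => exact inner_nonpos_of (hs l) (D.simple_obtuse (fun h => hjk (congrArg Fin.succ h)))

lemma aSimple_opp {j k : Fin (D.n + 1)} (hjk : j ≠ k)
    (h : (D.aSimple j).1 = -(D.aSimple k).1) : (D.aSimple j).2 + (D.aSimple k).2 = 1 := by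
  induction j using Fin.cases with
  | zero =>
    induction k using Fin.cases with
    | zero => exact absurd rfl hjk
    | succ i => rfl
  | succ i =>
    induction k using Fin.cases with
    | zero => rfl
    | succ l =>
      exfalso
      have h' : D.simpleRoot i = - D.simpleRoot l := h
      exact D.pos_not_both _ (D.simpleRoot_mem l) (h' ▸ D.simpleRoot_mem i)

/-- Classification of pairs of distinct simple affine roots. -/
lemma cartan_cases {j k : Fin (D.n + 1)} (hjk : j ≠ k) (A B : ℝ)
    (hA : A = -⟪(D.aSimple j).1, coroot (D.aSimple k).1⟫)
    (hB : B = -⟪(D.aSimple k).1, coroot (D.aSimple j).1⟫) :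
    ((D.aSimple j).1 = -(D.aSimple k).1) ∨ (A = 0 ∧ B = 0) ∨ (A = 1 ∧ B = 1) ∨
      (A = 1 ∧ B = 2) ∨ (A = 2 ∧ B = 1) ∨ (A = 1 ∧ B = 3) ∨ (A = 3 ∧ B = 1) := by
  have hjm := D.aSimple_mem j
  have hkm := D.aSimple_mem k
  have hob := D.aSimple_obtuse hjk
  generalize (D.aSimple j).1 = α at *
  generalize (D.aSimple k).1 = β at *
  have hα := D.ne_zero _ hjm
  have hβ := D.ne_zero _ hkm
  obtain ⟨x, hx⟩ := D.crystallographic _ hkm _ hjm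
  obtain ⟨y, hy⟩ := D.crystallographic _ hjm _ hkm
  have pα : (0 : ℝ) < ⟪α, α⟫ := real_inner_self_pos.mpr hα
  have pβ : (0 : ℝ) < ⟪β, β⟫ := real_inner_self_pos.mpr hβ
  have hx' : (x : ℝ) * ⟪β, β⟫ = 2 * ⟪α, β⟫ := by
    rw [← hx, inner_coroot]; field_simp
  have hy' : (y : ℝ) * ⟪α, α⟫ = 2 * ⟪α, β⟫ := by
    rw [← hy, inner_coroot, real_inner_comm α β]; field_simp
  have x0 : x ≤ 0 := by
    have : (x : ℝ) ≤ 0 := by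
      by_contra h; push Not at h; nlinarith [mul_pos h pβ]
    exact_mod_cast this
  have y0 : y ≤ 0 := by
    have : (y : ℝ) ≤ 0 := by
      by_contra h; push Not at h; nlinarith [mul_pos h pα]
    exact_mod_cast this
  have hxy : x = 0 ↔ y = 0 := by
    constructor
    · rintro rfl
      have h1 : (y : ℝ) * ⟪α, α⟫ = 0 := by rw [hy', ← hx']; simp
      exact_mod_cast (mul_eq_zero.mp h1).resolve_right pα.ne'
    · rintro rfl
      have h1 : (x : ℝ) * ⟪β, β⟫ = 0 := by rw [hx', ← hy']; simp
      exact_mod_cast (mul_eq_zero.mp h1).resolve_right pβ.ne'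
  have hprod : ((x : ℝ) * y) * (⟪α, α⟫ * ⟪β, β⟫) = 4 * ⟪α, β⟫ ^ 2 := by
    linear_combination (y * ⟪α, α⟫) * hx' + 2 * ⟪α, β⟫ * hy'
  by_cases h4 : x * y ≤ 3
  · right
    rw [hx] at hA
    rw [hy] at hB
    have hx3 : -3 ≤ x := by
      by_contra h
      push Not at h
      have : y ≠ 0 := fun h' => by have := hxy.mpr h'; omega
      have : y ≤ -1 := by omega
      nlinarith
    have hy3 : -3 ≤ y := by
      by_contra h
      push Not at h
      have : x ≠ 0 := fun h' => by have := hxy.mp h'; omega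
      have : x ≤ -1 := by omega
      nlinarith
    subst hA hB
    interval_cases x <;> interval_cases y <;> simp at h4 hxy ⊢
  · left
    push Not at h4
    have h4' : (4 : ℝ) ≤ x * y := by exact_mod_cast h4
    -- Cauchy-Schwarz equality: beta is a multiple of alpha
    set t : ℝ := ⟪α, β⟫ / ⟪β, β⟫ with ht
    have hz : ⟪α - t • β, α - t • β⟫ ≤ (0 : ℝ) := by
      have : ⟪α - t • β, α - t • β⟫ = (⟪α, α⟫ * ⟪β, β⟫ - ⟪α, β⟫ ^ 2) / ⟪β, β⟫ := by
        simp only [inner_sub_left, inner_sub_right, inner_smul_left, inner_smul_right,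
          RCLike.conj_to_real, real_inner_comm α β]
        rw [ht]; field_simp; ring
      rw [this]
      apply div_nonpos_of_nonpos_of_nonneg _ pβ.le
      nlinarith [mul_pos pα pβ]
    have hz' : α - t • β = 0 := by
      by_contra h
      linarith [real_inner_self_pos.mpr h]
    have hαt : α = t • β := sub_eq_zero.mp hz'
    rcases D.reduced β hkm t (hαt ▸ hjm) with h1 | h1
    · exfalso
      rw [h1, one_smul] at hαt
      rw [hαt] at hob
      linarith
    · rw [hαt, h1]; module

lemma wext_isometry (c : ℝ) {u : Equiv.Perm V} (hu : u ∈ D.Wext c) : Isometry u := by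
  induction hu using Subgroup.closure_induction with
  | mem e he =>
    rcases he with ⟨a, -, he⟩ | ⟨lam, -, he⟩
    · refine Isometry.of_dist_eq fun x y => ?_
      rw [dist_eq_norm, dist_eq_norm, he, he, ← reflect_norm a.1 (x - y)]
      congr 1
      simp only [sAff, aval, inner_sub_left]
      module
    · refine Isometry.of_dist_eq fun x y => ?_
      rw [he, he, dist_add_right]
  | one => exact isometry_id
  | mul x y _ _ hx hy => exact hx.comp hy
  | inv x _ hx => exact hx.right_inv x.apply_symm_apply

/-- Elements of the extended affine Weyl group intertwine the affine reflections. -/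
lemma conj_sAff (c : ℝ) {u : Equiv.Perm V} (hu : u ∈ D.Wext c) (a b : V × ℤ)
    (ha : a.1 ≠ 0) (hb : b.1 ≠ 0) (h : ∀ x, aval c a (u⁻¹ x) = aval c b x) (x : V) :
    u (sAff c a (u⁻¹ x)) = sAff c b x := by
  let e : V ≃ᵢ V := ⟨u, D.wext_isometry c hu⟩
  let E := e.toRealAffineIsometryEquiv
  have hE : ∀ y, E y = u y := fun y => by simp [E, e]
  let L := E.linearIsometryEquiv
  have hL : ∀ y v, u (y + v) = u y + L v := by
    intro y v
    rw [← hE, ← hE, add_comm y v, add_comm (E y)]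
    exact E.map_vadd y v
  have h1 : ∀ y, aval c a y = aval c b (u y) := by
    intro y
    have := h (u y)
    rwa [show u⁻¹ (u y) = y from u.symm_apply_apply y] at this
  have h2 : ∀ v, ⟪v, coroot a.1⟫ = ⟪L v, coroot b.1⟫ := by
    intro v
    have k1 := h1 (0 + v)
    rw [hL, aval_add, aval_add, h1 0] at k1
    linarith
  have h3 : L (coroot a.1) = coroot b.1 := by
    refine ext_inner_left ℝ fun w => ?_
    obtain ⟨v, rfl⟩ := L.surjective w
    rw [← h2, L.inner_map_map]
  have h4 : L a.1 = b.1 := by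
    have h5 : ∀ v, L (coroot v) = coroot (L v) := fun v => by
      rw [coroot, coroot, L.inner_map_map, map_smul]
    rw [← coroot_coroot ha, ← coroot_coroot hb, ← h3, h5]
  rw [sAff, sub_eq_add_neg, hL, h, show u (u⁻¹ x) = x from u.apply_symm_apply x, map_neg, map_smul, h4, sAff,
    sub_eq_add_neg]

/-- The affine reflection as a permutation. -/
def permS (c : ℝ) (a : V × ℤ) (ha : a.1 ≠ 0) : Equiv.Perm V :=
  ⟨sAff c a, sAff c a, sAff_self c ha, sAff_self c ha⟩

lemma permS_mem (c : ℝ) (a : V × ℤ) (ha : a.1 ∈ D.R0) :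
    permS c a (D.ne_zero _ ha) ∈ D.Wext c :=
  Subgroup.subset_closure (Or.inl ⟨a, ha, fun _ => rfl⟩)

lemma tau_eq (c : ℝ) (τ : V × ℤ → ℂ) (hτ : D.IsMultiplicity c τ) (a b : V × ℤ)
    (ha : a.1 ∈ D.R0) (hb : b.1 ∈ D.R0)
    (h1 : ⟪a.1, coroot b.1⟫ = (-1 : ℝ)) (h2 : ⟪b.1, coroot a.1⟫ = (-1 : ℝ)) : τ a = τ b := by
  refine hτ.2 _ (mul_mem (D.permS_mem c a ha) (D.permS_mem c b hb)) a b ha hb ?_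
  intro x
  change aval c a (sAff c b (sAff c a x)) = _
  simp only [aval_sAff, h1, h2, inner_coroot_self (D.ne_zero _ ha)]
  ring

end RootSystemData

set_option maxHeartbeats 2000000 in
open RootSystemData in
/-- the difference-reflection operators satisfy the defining relations of
the extended affine Hecke algebra (quadratic relations, braid relations, and
`Ω`-conjugation relations) on the space of functions `V → ℂ`. -/
theorem statement0 {V : Type*} [NormedAddCommGroup V] [InnerProductSpace ℝ V]
    (D : RootSystemData V) (c : ℝ) (hc : 0 < c)
    (τ : V × ℤ → ℂ) (hτ : D.IsMultiplicity c τ) :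
    -- (i) quadratic relations (T̂_j - τ_j) ∘ (T̂_j + τ_j⁻¹) = 0
    (∀ j : Fin (D.n + 1), ∀ f : V → ℂ, ∀ x : V,
      hatT c τ (D.aSimple j)
          (fun y => hatT c τ (D.aSimple j) f y + (τ (D.aSimple j))⁻¹ * f y) x
        - τ (D.aSimple j) *
            (hatT c τ (D.aSimple j) f x + (τ (D.aSimple j))⁻¹ * f x) = 0) ∧
    -- (ii) braid relations, with m = the (finite) order of s_{a_j} s_{a_k} in W
    (∀ j k : Fin (D.n + 1), j ≠ k → ∀ m : ℕ, 0 < m →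
      (fun x => sAff c (D.aSimple j) (sAff c (D.aSimple k) x))^[m] = id →
      (∀ m' : ℕ, 0 < m' → m' < m →
        (fun x => sAff c (D.aSimple j) (sAff c (D.aSimple k) x))^[m'] ≠ id) →
      altComp (hatT c τ (D.aSimple j)) (hatT c τ (D.aSimple k)) m
        = altComp (hatT c τ (D.aSimple k)) (hatT c τ (D.aSimple j)) m) ∧
    -- (iii) u ∘ T̂_j ∘ u⁻¹ = T̂_{u_j} for u ∈ Ω, where u a_j = a_{u_j}
    (∀ u : Equiv.Perm V, u ∈ D.Wext c → D.len c u = 0 →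
      ∀ j k : Fin (D.n + 1),
        (∀ x : V, aval c (D.aSimple j) (u⁻¹ x) = aval c (D.aSimple k) x) →
        ∀ f : V → ℂ, ∀ x : V,
          hatT c τ (D.aSimple j) (fun y => f (u y)) (u⁻¹ x)
            = hatT c τ (D.aSimple k) f x) := by
  have hR : ∀ j, (D.aSimple j).1 ∈ D.R0 := D.aSimple_mem
  have hne : ∀ j, (D.aSimple j).1 ≠ 0 := fun j => D.ne_zero _ (hR j)
  have ht : ∀ j, τ (D.aSimple j) ≠ 0 := fun j => hτ.1 _ (hR j)
  refine ⟨?_, ?_, ?_⟩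
  · intro j f x
    have H := rk2_of c τ _ _ (hne j) (hne j) (ht j) (ht j)
    have hsq := congrFun (LinearMap.congr_fun H.sqa f) x
    simp only [Module.End.mul_apply, LinearMap.add_apply, LinearMap.smul_apply,
      Module.End.one_apply, Pi.add_apply, Pi.smul_apply, smul_eq_mul] at hsq
    simp only [hatT_eq]
    have e : (fun y => (Tlin (sAff c (D.aSimple j)) (aval c (D.aSimple j)) (τ (D.aSimple j))) f y
        + (τ (D.aSimple j))⁻¹ * f y)
        = (Tlin (sAff c (D.aSimple j)) (aval c (D.aSimple j)) (τ (D.aSimple j))) f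
          + (τ (D.aSimple j))⁻¹ • f := rfl
    rw [e, map_add, map_smul, Pi.add_apply, Pi.smul_apply, smul_eq_mul, hsq]
    have := mul_inv_cancel₀ (ht j)
    linear_combination (-f x) * this
  · intro j k hjk m hm hid hmin
    have H := rk2_of c τ _ _ (hne j) (hne k) (ht j) (ht k)
    obtain ⟨A, hA⟩ : ∃ A : ℝ, A = -⟪(D.aSimple j).1, coroot (D.aSimple k).1⟫ := ⟨_, rfl⟩
    obtain ⟨B, hB⟩ : ∃ B : ℝ, B = -⟪(D.aSimple k).1, coroot (D.aSimple j).1⟫ := ⟨_, rfl⟩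
    have hcases := D.cartan_cases hjk A B hA hB
    have hopp := D.aSimple_opp hjk
    have htau : A = 1 → B = 1 → τ (D.aSimple j) = τ (D.aSimple k) := fun h1 h2 =>
      D.tau_eq c τ hτ _ _ (hR j) (hR k) (by linarith) (by linarith)
    rw [← hA, ← hB] at H
    have hTj : hatT c τ (D.aSimple j) = Tlin (sAff c (D.aSimple j)) (aval c (D.aSimple j))
      (τ (D.aSimple j)) := funext fun f => hatT_eq c τ _ f
    have hTk : hatT c τ (D.aSimple k) = Tlin (sAff c (D.aSimple k)) (aval c (D.aSimple k))
      (τ (D.aSimple k)) := funext fun f => hatT_eq c τ _ f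
    rw [hTj, hTk]
    have hx : ∃ x, aval c (D.aSimple j) x ≠ 0 := by
      by_contra h
      push Not at h
      have h1 := h (0 + (D.aSimple j).1)
      rw [aval_add, h, inner_coroot_self (hne j)] at h1
      norm_num at h1
    obtain ⟨x, hx⟩ := hx
    have hj1 : ∀ x, sAff c (D.aSimple j) x = x - aval c (D.aSimple j) x • (D.aSimple j).1 :=
      fun _ => rfl
    have hk1 : ∀ x, sAff c (D.aSimple k) x = x - aval c (D.aSimple k) x • (D.aSimple k).1 :=
      fun _ => rfl
    have hsum : (D.aSimple j).1 = -(D.aSimple k).1 →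
        ∀ y, aval c (D.aSimple j) y + aval c (D.aSimple k) y = c := by
      intro h y
      have h2 := hopp h
      have h3 : ((D.aSimple j).2 : ℝ) + (D.aSimple k).2 = 1 := by exact_mod_cast h2
      simp only [aval, h, coroot, inner_neg_left, inner_neg_right, neg_neg, smul_neg]
      linear_combination c * h3
    generalize sAff c (D.aSimple j) = sa at *
    generalize sAff c (D.aSimple k) = sb at *
    generalize aval c (D.aSimple j) = p at *
    generalize aval c (D.aSimple k) = q at *
    generalize τ (D.aSimple j) = ta at *
    generalize τ (D.aSimple k) = tb at *
    rcases hcases with h | ⟨rfl, rfl⟩ | ⟨rfl, rfl⟩ | ⟨rfl, rfl⟩ | ⟨rfl, rfl⟩ | ⟨rfl, rfl⟩ |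
      ⟨rfl, rfl⟩
    · exfalso
      have hB2 : B = 2 := by
        rw [hB, h, coroot, inner_neg_neg, smul_neg, inner_neg_right, neg_neg]
        exact inner_coroot_self (hne k)
      have hs := hsum h
      have hstep : ∀ y, p (sa (sb y)) = p y - 2 * c := by
        intro y
        rw [H.hpa, H.hpb, hB2]
        linarith [hs y]
      have hit : ∀ l : ℕ, ∀ y, p ((fun y => sa (sb y))^[l] y) = p y - 2 * c * l := by
        intro l
        induction l with
        | zero => intro y; simp
        | succ l ih =>
          intro y
          rw [Function.iterate_succ_apply, ih, hstep]
          push_cast; ring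
      have h1 := hit m x
      rw [hid, id_eq] at h1
      have : (0 : ℝ) < m := by exact_mod_cast hm
      nlinarith [mul_pos hc this]
    · have hw : ∀ x, sb (sa x) = sa (sb x) := by
        intro x
        simp only [hj1 (sb x), hk1 (sa x), H.hpb, H.hqa]
        simp only [hj1 x, hk1 x]
        module
      have hm2 := H.order m 2 (by norm_num) x hx hm hid hmin (by
        funext y
        simp only [Function.iterate_succ, Function.iterate_zero, Function.comp_apply, id_eq, hw,
          H.hsa, H.hsb])
      subst hm2
      funext f
      exact LinearMap.congr_fun (H.braid2 hw) f
    · have hw : ∀ x, sa (sb (sa x)) = sb (sa (sb x)) := by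
        intro x
        simp only [hj1 (sb (sa x)), hk1 (sa (sb x)), H.hpa, H.hqa, H.hpb, H.hqb]
        simp only [hj1 (sb x), hk1 (sa x), H.hpb, H.hqa]
        simp only [hj1 x, hk1 x]
        module
      have hm2 := H.order m 3 (by norm_num) x hx hm hid hmin (by
        funext y
        simp only [Function.iterate_succ, Function.iterate_zero, Function.comp_apply, id_eq, hw,
          H.hsa, H.hsb])
      subst hm2
      funext f
      exact LinearMap.congr_fun (H.braid3 (htau rfl rfl) hw) f
    · have hw := H.word4 hj1 hk1
      have hm2 := H.order m 4 (by norm_num) x hx hm hid hmin (by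
        funext y
        simp only [Function.iterate_succ, Function.iterate_zero, Function.comp_apply, id_eq]
        rw [← hw (sa (sb (sa (sb y))))]
        simp only [H.hsa, H.hsb])
      subst hm2
      funext f
      exact LinearMap.congr_fun (H.braid4 hw) f
    · have hw := H.swap.word4 hk1 hj1
      have hm2 := H.order m 4 (by norm_num) x hx hm hid hmin (by
        funext y
        simp only [Function.iterate_succ, Function.iterate_zero, Function.comp_apply, id_eq]
        rw [hw (sa (sb (sa (sb y))))]
        simp only [H.hsa, H.hsb])
      subst hm2
      funext f
      exact LinearMap.congr_fun (H.swap.braid4 hw).symm f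
    · have hw := H.word6 hj1 hk1
      have hm2 := H.order m 6 (by norm_num) x hx hm hid hmin (by
        funext y
        simp only [Function.iterate_succ, Function.iterate_zero, Function.comp_apply, id_eq]
        rw [← hw (sa (sb (sa (sb (sa (sb y))))))]
        simp only [H.hsa, H.hsb])
      subst hm2
      funext f
      exact LinearMap.congr_fun (H.braid6 hw) f
    · have hw := H.swap.word6 hk1 hj1
      have hm2 := H.order m 6 (by norm_num) x hx hm hid hmin (by
        funext y
        simp only [Function.iterate_succ, Function.iterate_zero, Function.comp_apply, id_eq]
        rw [hw (sa (sb (sa (sb (sa (sb y))))))]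
        simp only [H.hsa, H.hsb])
      subst hm2
      funext f
      exact LinearMap.congr_fun (H.swap.braid6 hw).symm f
  · intro u hu _ j k h f x
    have hconj := D.conj_sAff c hu _ _ (hne j) (hne k) h x
    have hteq : τ (D.aSimple j) = τ (D.aSimple k) :=
      hτ.2 u hu _ _ (hR j) (hR k) h
    have hux : u (u⁻¹ x) = x := u.apply_symm_apply x
    simp only [hatT, h, hconj, hteq, hux]
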